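/- For a Tychonoff topological space X, the following are equivalent: (1) X is weak (4,4)-structured; (2) there exist a compact Hausdorff space K, a charming space M, a closed subset F of K × M (with the product topology), and a continuous surjection from F (with the subspace topology) onto X; (3) there exist a charming space M and a set-valued map φ assigning to each x ∈ M a compact subset φ(x) of X, such that ⋃_{x∈M} φ(x) = X and for every open set U ⊆ X the set {x ∈ M : φ(x) ⊆ U} is open in M. -/

import Mathlib

open Set Function TopologicalSpace

universe u

/-- A map between topological spaces is *perfect* if it is continuous, closed, and
every fiber is compact. -/
def PerfectMap {Y : Type*} {Z : Type*} [TopologicalSpace Y] [TopologicalSpace Z]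
    (f : Y → Z) : Prop :=
  Continuous f ∧ IsClosedMap f ∧ ∀ z : Z, IsCompact (f ⁻¹' {z})

/-- A topological space `X` is a *Lindelöf Σ-space* if there exist a topological space `Y`,
a continuous surjection from `Y` onto `X`, and a perfect surjection from `Y` onto some
second-countable space. -/
def IsLindelofSigma (X : Type u) [TopologicalSpace X] : Prop :=
  ∃ (Y : Type u) (tY : TopologicalSpace Y) (Z : Type u) (tZ : TopologicalSpace Z),
    @SecondCountableTopology Z tZ ∧
    (∃ f : Y → X, @Continuous Y X tY _ f ∧ Surjective f) ∧
    (∃ g : Y → Z, @PerfectMap Y Z tY tZ g ∧ Surjective g)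

/-- A topological space `X` is a *charming space* if there is a subset `Y` of `X` that is a
Lindelöf Σ-space in the subspace topology and such that for every open `U ⊇ Y`,
the set `X \ U` is a Lindelöf Σ-space in the subspace topology. -/
def IsCharming (X : Type u) [TopologicalSpace X] : Prop :=
  ∃ Y : Set X, IsLindelofSigma Y ∧
    ∀ U : Set X, IsOpen U → Y ⊆ U → IsLindelofSigma ↥(Uᶜ)

/-- A *CL-charming* space: the shell `Y` can be chosen closed. -/
def IsCLCharming (X : Type u) [TopologicalSpace X] : Prop :=
  ∃ Y : Set X, IsClosed Y ∧ IsLindelofSigma Y ∧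
    ∀ U : Set X, IsOpen U → Y ⊆ U → IsLindelofSigma ↥(Uᶜ)

/-- A *CO-charming* space: the shell `Y` can be chosen compact. -/
def IsCOCharming (X : Type u) [TopologicalSpace X] : Prop :=
  ∃ Y : Set X, IsCompact Y ∧ IsLindelofSigma Y ∧
    ∀ U : Set X, IsOpen U → Y ⊆ U → IsLindelofSigma ↥(Uᶜ)

/-- A space has a *countable network* if there is a countable family `N` of subsets such that
every point in every open set `V` is contained in a member of `N` contained in `V`. -/
def HasCountableNetwork (X : Type u) [TopologicalSpace X] : Prop :=
  ∃ N : Set (Set X), N.Countable ∧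
    ∀ x : X, ∀ V : Set X, IsOpen V → x ∈ V → ∃ n ∈ N, x ∈ n ∧ n ⊆ V

/-- A topological space `X` is *weak (4,4)-structured* if there exist a topological space `Y`,
a continuous surjection from `Y` onto `X`, and a perfect surjection from `Y` onto some
charming space. -/
def IsWeak44Structured (X : Type u) [TopologicalSpace X] : Prop :=
  ∃ (Y : Type u) (tY : TopologicalSpace Y) (M : Type u) (tM : TopologicalSpace M),
    @IsCharming M tM ∧
    (∃ f : Y → X, @Continuous Y X tY _ f ∧ Surjective f) ∧
    (∃ g : Y → M, @PerfectMap Y M tY tM g ∧ Surjective g)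

/-!
Perfect preimages of Lindelöf Σ-spaces are Lindelöf Σ, by base change of the perfect map along the
continuous surjection that witnesses the Σ-property. Hence perfect preimages of charming spaces are
charming: if `e : W → X` is perfect and `Y` is a shell of `X`, then `e ⁻¹' Y` is a shell of `W`,
since a closed set missing `e ⁻¹' Y` has a closed image missing `Y`.

All three conditions therefore say that `X` is a continuous image of a charming space. In (2) the
projection of a closed subset of `K × M` to `M` is proper because `K` is compact; in (3) the same
holds for the projection of the graph of `φ` to `M`, because `φ` is upper semicontinuous with
compact values. Conversely, a continuous surjection `f : M → X` gives (2) with `K` a point and (3)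
with `φ m = {f m}`.
-/

section ProperMaps

open Filter Topology

theorem perfectMap_iff_isProperMap {Y Z : Type*} [TopologicalSpace Y] [TopologicalSpace Z]
    {g : Y → Z} : PerfectMap g ↔ IsProperMap g :=
  isProperMap_iff_isClosedMap_and_compact_fibers.symm

theorem isProperMap_rangeFactorization {Y Z : Type*} [TopologicalSpace Y] [TopologicalSpace Z]
    {g : Y → Z} (hg : IsProperMap g) : IsProperMap (rangeFactorization g) :=
  isProperMap_of_comp_of_inj hg.continuous.rangeFactorization continuous_subtype_val hg
    Subtype.val_injective

theorem isProperMap_pullback_snd {W X Y : Type*} [TopologicalSpace W] [TopologicalSpace X]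
    [TopologicalSpace Y] {e : W → X} {f : Y → X} (he : IsProperMap e) (hf : Continuous f) :
    IsProperMap (Pullback.snd : e.Pullback f → Y) := by
  refine isProperMap_iff_ultrafilter.2
    ⟨continuous_snd.comp continuous_subtype_val, fun 𝒰 y h𝒰 => ?_⟩
  have h_base : Tendsto e (𝒰.map Pullback.fst) (𝓝 (f y)) := by
    rw [Ultrafilter.coe_map, tendsto_map'_iff, pullback_comm_sq]
    exact (hf.tendsto y).comp h𝒰
  obtain ⟨w, hwy, hw⟩ := he.ultrafilter_le_nhds_of_tendsto h_base
  refine ⟨⟨(w, y), hwy⟩, rfl, ?_⟩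
  rw [nhds_subtype_eq_comap, ← tendsto_iff_comap, nhds_prod_eq]
  exact Tendsto.prodMk hw h𝒰

theorem exists_mem_le_nhds_of_ultrafilter_le_nhdsSet {X : Type*} [TopologicalSpace X] {s : Set X}
    (hs : IsCompact s) {𝒰 : Ultrafilter X} (h𝒰 : 𝒰 ≤ 𝓝ˢ s) : ∃ x ∈ s, 𝒰 ≤ 𝓝 x := by
  by_contra! h
  have h_disjoint : Disjoint (𝓝ˢ s) 𝒰 :=
    hs.disjoint_nhdsSet_left.2 fun x hx => (Ultrafilter.disjoint_iff_not_le.2 (h x hx)).symm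
  exact 𝒰.neBot.ne (h_disjoint.eq_bot_of_ge h𝒰)

theorem isProperMap_graph_snd {M X : Type*} [TopologicalSpace M] [TopologicalSpace X]
    {φ : M → Set X} (hφ : UpperHemicontinuous φ) (hc : ∀ m, IsCompact (φ m)) :
    IsProperMap fun p : {p : X × M // p.1 ∈ φ p.2} => p.1.2 := by
  refine isProperMap_iff_ultrafilter.2
    ⟨continuous_snd.comp continuous_subtype_val, fun 𝒰 m h𝒰 => ?_⟩
  have h_fst : 𝒰.map (fun p => p.1.1) ≤ 𝓝ˢ (φ m) := fun t ht =>
    (h𝒰.eventually (hφ m t ht)).mono fun p hp => subset_of_mem_nhdsSet hp p.2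
  obtain ⟨x, hx, h𝒰x⟩ := exists_mem_le_nhds_of_ultrafilter_le_nhdsSet (hc m) h_fst
  refine ⟨⟨(x, m), hx⟩, rfl, ?_⟩
  rw [nhds_subtype_eq_comap, ← tendsto_iff_comap, nhds_prod_eq]
  exact Tendsto.prodMk h𝒰x h𝒰

end ProperMaps

section CharmingSpaces

variable {W X : Type u} [TopologicalSpace W] [TopologicalSpace X] {e : W → X}

theorem IsLindelofSigma.of_isProperMap (he : IsProperMap e) (hX : IsLindelofSigma X) :
    IsLindelofSigma W := by
  obtain ⟨Y, _, Z, _, _, ⟨f, hf, hf_surj⟩, g, hg, -⟩ := hX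
  let h : e.Pullback f → Z := g ∘ Pullback.snd
  have hh : IsProperMap h :=
    (perfectMap_iff_isProperMap.1 hg).comp (isProperMap_pullback_snd he hf)
  have h_fst_surj : Surjective (Pullback.fst : e.Pullback f → W) := fun w =>
    let ⟨y, hy⟩ := hf_surj (e w)
    ⟨⟨(w, y), hy.symm⟩, rfl⟩
  exact ⟨e.Pullback f, inferInstance, range h, inferInstance, inferInstance,
    ⟨Pullback.fst, continuous_fst.comp continuous_subtype_val, h_fst_surj⟩,
    rangeFactorization h, perfectMap_iff_isProperMap.2 (isProperMap_rangeFactorization hh),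
    rangeFactorization_surjective⟩

theorem IsCharming.of_isProperMap (he : IsProperMap e) (hX : IsCharming X) : IsCharming W := by
  obtain ⟨Y, hY, hY_compl⟩ := hX
  refine ⟨e ⁻¹' Y, hY.of_isProperMap (he.restrictPreimage Y), fun U hU hYU => ?_⟩
  have h_restrict : IsProperMap fun w : ↥Uᶜ => e w := he.restrict hU.isClosed_compl
  have hY_sub : Y ⊆ (range fun w : ↥Uᶜ => e w)ᶜ := by
    rintro _ hy ⟨w, rfl⟩
    exact w.2 (hYU hy)
  have h_range : IsLindelofSigma (range fun w : ↥Uᶜ => e w) := by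
    have := hY_compl _ h_restrict.isClosed_range.isOpen_compl hY_sub
    rwa [compl_compl] at this
  exact h_range.of_isProperMap (isProperMap_rangeFactorization h_restrict)

end CharmingSpaces

/-- A topological space `X` is a *charming image* if it is a continuous image of a charming space.
This is the common form of the three characterizations; the charming space is taken in the universe
of `X`, as in `IsWeak44Structured`. -/
def IsCharmingImage (X : Type u) [TopologicalSpace X] : Prop :=
  ∃ (M : Type u) (_ : TopologicalSpace M) (f : M → X), IsCharming M ∧ Continuous f ∧ Surjective f

section Characterizations

variable {X : Type u} [TopologicalSpace X]

theorem isWeak44Structured_iff_isCharmingImage : IsWeak44Structured X ↔ IsCharmingImage X := by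
  constructor
  · rintro ⟨Y, _, M, _, hM, ⟨f, hf, hf_surj⟩, g, hg, -⟩
    exact ⟨Y, ‹_›, f, hM.of_isProperMap (perfectMap_iff_isProperMap.1 hg), hf, hf_surj⟩
  · rintro ⟨M, _, f, hM, hf, hf_surj⟩
    exact ⟨M, ‹_›, M, ‹_›, hM, ⟨f, hf, hf_surj⟩,
      id, perfectMap_iff_isProperMap.2 IsHomeomorph.id.isProperMap, surjective_id⟩

theorem isCharmingImage_iff_exists_isClosed_prod :
    IsCharmingImage X ↔
      ∃ (K : Type u) (_ : TopologicalSpace K) (M : Type u) (_ : TopologicalSpace M),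
        CompactSpace K ∧ T2Space K ∧ IsCharming M ∧
        ∃ F : Set (K × M), IsClosed F ∧ ∃ f : F → X, Continuous f ∧ Surjective f := by
  constructor
  · rintro ⟨M, _, f, hM, hf, hf_surj⟩
    refine ⟨PUnit, inferInstance, M, ‹_›, inferInstance, inferInstance, hM,
      univ, isClosed_univ, fun p => f p.1.2, by fun_prop, fun x => ?_⟩
    obtain ⟨m, rfl⟩ := hf_surj x
    exact ⟨⟨(PUnit.unit, m), mem_univ _⟩, rfl⟩
  · rintro ⟨K, _, M, _, _, -, hM, F, hF, f, hf, hf_surj⟩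
    have h_snd : IsProperMap fun p : F => p.1.2 :=
      isProperMap_snd_of_compactSpace.comp hF.isProperMap_subtypeVal
    exact ⟨F, inferInstance, f, hM.of_isProperMap h_snd, hf, hf_surj⟩

theorem isCharmingImage_iff_exists_usco :
    IsCharmingImage X ↔
      ∃ (M : Type u) (_ : TopologicalSpace M) (φ : M → Set X),
        IsCharming M ∧ (∀ m, IsCompact (φ m)) ∧ ⋃ m, φ m = univ ∧
        ∀ U : Set X, IsOpen U → IsOpen {m | φ m ⊆ U} := by
  constructor
  · rintro ⟨M, _, f, hM, hf, hf_surj⟩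
    refine ⟨M, ‹_›, fun m => {f m}, hM, fun _ => isCompact_singleton, ?_, fun U hU => ?_⟩
    · rw [iUnion_singleton_eq_range, hf_surj.range_eq]
    · simp only [singleton_subset_iff]
      exact hU.preimage hf
  · rintro ⟨M, _, φ, hM, hc, h_cover, hφ⟩
    have h_snd : IsProperMap fun p : {p : X × M // p.1 ∈ φ p.2} => p.1.2 :=
      isProperMap_graph_snd (upperHemicontinuous_iff_isOpen_preimage_Iic.2 hφ) hc
    refine ⟨{p : X × M // p.1 ∈ φ p.2}, inferInstance, fun p => p.1.1,
      hM.of_isProperMap h_snd, by fun_prop, fun x => ?_⟩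
    obtain ⟨m, hm⟩ := iUnion_eq_univ_iff.1 h_cover x
    exact ⟨⟨(x, m), hm⟩, rfl⟩

end Characterizations

theorem weak44_characterizations_general {X : Type u} [TopologicalSpace X] :
    (IsWeak44Structured X ↔
      ∃ (K : Type u) (_ : TopologicalSpace K) (M : Type u) (_ : TopologicalSpace M),
        CompactSpace K ∧ T2Space K ∧ IsCharming M ∧
        ∃ F : Set (K × M), IsClosed F ∧ ∃ f : F → X, Continuous f ∧ Surjective f) ∧
    (IsWeak44Structured X ↔
      ∃ (M : Type u) (_ : TopologicalSpace M) (φ : M → Set X),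
        IsCharming M ∧ (∀ m, IsCompact (φ m)) ∧ ⋃ m, φ m = univ ∧
        ∀ U : Set X, IsOpen U → IsOpen {m | φ m ⊆ U}) :=
  ⟨isWeak44Structured_iff_isCharmingImage.trans isCharmingImage_iff_exists_isClosed_prod,
    isWeak44Structured_iff_isCharmingImage.trans isCharmingImage_iff_exists_usco⟩

/-- Characterizations of weak (4,4)-structured spaces: (1) ↔ (2) ↔ (3). -/
theorem weak44_characterizations {X : Type u} [TopologicalSpace X] [T35Space X] :
    (IsWeak44Structured X ↔
      ∃ (K : Type u) (tK : TopologicalSpace K) (M : Type u) (tM : TopologicalSpace M),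
        @CompactSpace K tK ∧ @T2Space K tK ∧ @IsCharming M tM ∧
        ∃ F : Set (K × M),
          @IsClosed (K × M) (@instTopologicalSpaceProd K M tK tM) F ∧
          ∃ f : F → X,
            @Continuous (↥F) X
              (@instTopologicalSpaceSubtype (K × M) (fun z => z ∈ F)
                (@instTopologicalSpaceProd K M tK tM)) _ f ∧
            Surjective f) ∧
    (IsWeak44Structured X ↔
      ∃ (M : Type u) (tM : TopologicalSpace M) (φ : M → Set X),
        @IsCharming M tM ∧
        (∀ x : M, IsCompact (φ x)) ∧
        (⋃ x : M, φ x) = Set.univ ∧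
        ∀ U : Set X, IsOpen U → @IsOpen M tM {x : M | φ x ⊆ U}) :=
  weak44_characterizations_general
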